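/- arXiv:2506.08720 — 2 statements merged into one kernel-verified Lean document; each statement's English description precedes it below -/
import Mathlib

section
/- Let M and Z be real m×n matrices with rank(M) ≤ r. Then the Frobenius inner product satisfies ⟨M, Z⟩ ≤ ‖M‖_F · ‖Π_r(Z)‖_F, where Π_r(Z) is the best rank-r approximation of Z. -/
open Matrix Finset

attribute [local instance] Classical.propDecidable

/-- Frobenius norm of a real matrix. -/
noncomputable def frobNorm {m n : ℕ} (A : Matrix (Fin m) (Fin n) ℝ) : ℝ :=
  Real.sqrt (∑ i, ∑ j, (A i j) ^ 2)

/-- Frobenius inner product ⟨A,B⟩ = trace(AᵀB). -/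
noncomputable def frobInner {m n : ℕ} (A B : Matrix (Fin m) (Fin n) ℝ) : ℝ :=
  ∑ i, ∑ j, A i j * B i j

/-- Operator (spectral) norm of a real matrix w.r.t. Euclidean norms. -/
noncomputable def specNorm {m n : ℕ} (A : Matrix (Fin m) (Fin n) ℝ) : ℝ :=
  ⨆ x : {x : Fin n → ℝ // ∑ a, x a ^ 2 ≤ 1}, Real.sqrt (∑ a, (A.mulVec x.1) a ^ 2)

/-- A singular value decomposition of `M`: `M = ∑ i, s i • u i (v i)ᵀ` with
orthonormal `u`, `v` and nonincreasing nonnegative singular values `s`. -/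
structure SVDOf {m n : ℕ} (M : Matrix (Fin m) (Fin n) ℝ) where
  s : Fin (min m n) → ℝ
  u : Fin (min m n) → Fin m → ℝ
  v : Fin (min m n) → Fin n → ℝ
  s_nonneg : ∀ i, 0 ≤ s i
  s_anti : ∀ i j : Fin (min m n), i ≤ j → s j ≤ s i
  u_orth : ∀ i j, (∑ a, u i a * u j a) = if i = j then (1 : ℝ) else 0
  v_orth : ∀ i j, (∑ a, v i a * v j a) = if i = j then (1 : ℝ) else 0
  decomp : M = ∑ i, Matrix.of fun a b => s i * u i a * v i b

/-- Truncated SVD `Π_k(M)`: keep the `k` largest singular values. -/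
noncomputable def SVDOf.trunc {m n : ℕ} {M : Matrix (Fin m) (Fin n) ℝ}
    (D : SVDOf M) (k : ℕ) : Matrix (Fin m) (Fin n) ℝ :=
  ∑ i ∈ Finset.univ.filter (fun i : Fin (min m n) => (i : ℕ) < k),
    Matrix.of fun a b => D.s i * D.u i a * D.v i b

/-- Hard singular value thresholding `M(ξ)`: keep singular values `≥ ξ`. -/
noncomputable def SVDOf.thresh {m n : ℕ} {M : Matrix (Fin m) (Fin n) ℝ}
    (D : SVDOf M) (ξ : ℝ) : Matrix (Fin m) (Fin n) ℝ :=
  ∑ i ∈ Finset.univ.filter (fun i : Fin (min m n) => ξ ≤ D.s i),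
    Matrix.of fun a b => D.s i * D.u i a * D.v i b

lemma aux_expand {m n : ℕ} {ι : Type*} [DecidableEq ι] (S : Finset ι) (u : ι → Fin m → ℝ)
    (x : ι → Fin n → ℝ)
    (hu : ∀ i j, (∑ a, u i a * u j a) = if i = j then (1 : ℝ) else 0) :
    ∑ a, ∑ b, (∑ i ∈ S, u i a * x i b) ^ 2 = ∑ i ∈ S, ∑ b, x i b ^ 2 := by
  rw [Finset.sum_comm, Finset.sum_comm (s := S)]
  refine Finset.sum_congr rfl fun b _ => ?_
  calc ∑ a, (∑ i ∈ S, u i a * x i b) ^ 2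
      = ∑ a, ∑ i ∈ S, ∑ j ∈ S, (x i b * x j b) * (u i a * u j a) := by
        refine Finset.sum_congr rfl fun a _ => ?_
        rw [sq, Finset.sum_mul_sum]
        exact Finset.sum_congr rfl fun i _ => Finset.sum_congr rfl fun j _ => by ring
    _ = ∑ i ∈ S, ∑ j ∈ S, (x i b * x j b) * ∑ a, (u i a * u j a) := by
        rw [Finset.sum_comm]
        refine Finset.sum_congr rfl fun i _ => ?_
        rw [Finset.sum_comm]
        exact Finset.sum_congr rfl fun j _ => by rw [Finset.mul_sum]
    _ = _ := by
        refine Finset.sum_congr rfl fun i hi => ?_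
        simp [hu, hi, sq]

lemma aux_bessel {m : ℕ} {ι : Type*} [DecidableEq ι] [Fintype ι] (u : ι → Fin m → ℝ)
    (hu : ∀ i j, (∑ a, u i a * u j a) = if i = j then (1 : ℝ) else 0) (x : Fin m → ℝ) :
    ∑ i, (∑ a, u i a * x a) ^ 2 ≤ ∑ a, x a ^ 2 := by
  have h0 : 0 ≤ ∑ a, (x a - ∑ i, u i a * (∑ c, u i c * x c)) ^ 2 :=
    Finset.sum_nonneg fun a _ => sq_nonneg _
  have h1 := aux_expand (n := 1) Finset.univ u (fun i _ => ∑ c, u i c * x c) hu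
  simp only [Finset.univ_unique, Finset.sum_singleton] at h1
  have h2 : ∑ a, x a * ∑ i, u i a * (∑ c, u i c * x c) = ∑ i, (∑ a, u i a * x a) ^ 2 := by
    simp_rw [Finset.mul_sum (s := (Finset.univ : Finset ι))]
    rw [Finset.sum_comm]
    refine Finset.sum_congr rfl fun i _ => ?_
    rw [sq, Finset.sum_mul]
    exact Finset.sum_congr rfl fun a _ => by ring
  have h3 : ∑ a, (x a - ∑ i, u i a * (∑ c, u i c * x c)) ^ 2
      = ∑ a, x a ^ 2 - 2 * ∑ a, x a * ∑ i, u i a * (∑ c, u i c * x c)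
        + ∑ a, (∑ i, u i a * (∑ c, u i c * x c)) ^ 2 := by
    rw [Finset.mul_sum, ← Finset.sum_sub_distrib, ← Finset.sum_add_distrib]
    exact Finset.sum_congr rfl fun a _ => by ring
  rw [h3, h2, h1] at h0
  linarith

lemma aux_factor {m n : ℕ} (M : Matrix (Fin m) (Fin n) ℝ) :
    ∃ (w : Fin M.rank → Fin m → ℝ) (q : Fin M.rank → Fin n → ℝ),
      (∀ i j, (∑ a, w i a * w j a) = if i = j then (1 : ℝ) else 0) ∧
      ∀ a b, M a b = ∑ l, w l a * q l b := by
  let e := (WithLp.linearEquiv 2 ℝ (Fin m → ℝ)).symm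
  let W : Submodule ℝ (EuclideanSpace ℝ (Fin m)) :=
    (Submodule.span ℝ (Set.range M.col)).map e.toLinearMap
  have hW : Module.finrank ℝ W = M.rank := by
    rw [Matrix.rank_eq_finrank_span_cols]
    exact LinearEquiv.finrank_map_eq e _
  let B := (stdOrthonormalBasis ℝ W).reindex (finCongr hW)
  have hmem : ∀ b, e (M.col b) ∈ W := fun b =>
    Submodule.mem_map_of_mem (Submodule.subset_span ⟨b, rfl⟩)
  refine ⟨fun l a => (B l : EuclideanSpace ℝ (Fin m)) a,
    fun l b => B.repr ⟨e (M.col b), hmem b⟩ l, ?_, ?_⟩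
  · intro i j
    have := orthonormal_iff_ite.mp B.orthonormal i j
    rw [← this, Submodule.coe_inner, PiLp.inner_apply]
    exact Finset.sum_congr rfl fun a _ => by simp [mul_comm]
  · intro a b
    have := congrArg (fun x : W => (x : EuclideanSpace ℝ (Fin m)) a)
      (B.sum_repr ⟨e (M.col b), hmem b⟩)
    simp only [Submodule.coe_sum, Submodule.coe_smul, WithLp.ofLp_sum, Finset.sum_apply,
      PiLp.smul_apply, smul_eq_mul] at this
    simp_rw [mul_comm (((B _ : W) : EuclideanSpace ℝ (Fin m)) a)]
    rw [this]
    rfl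

lemma aux_major {N : ℕ} (r : ℕ) (t c : Fin N → ℝ) (ht : ∀ i, 0 ≤ t i)
    (hanti : ∀ i j, i ≤ j → t j ≤ t i) (hc0 : ∀ i, 0 ≤ c i) (hc1 : ∀ i, c i ≤ 1)
    (hc : ∑ i, c i ≤ r) :
    ∑ i, t i * c i ≤ ∑ i ∈ Finset.univ.filter (fun i : Fin N => (i : ℕ) < r), t i := by
  rw [Finset.sum_filter]
  by_cases hr : r < N
  · set τ := t ⟨r, hr⟩ with hτ
    have h1 : ∑ i, (t i - τ) * c i ≤ ∑ i : Fin N, if (i : ℕ) < r then t i - τ else 0 := by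
      refine Finset.sum_le_sum fun i _ => ?_
      split_ifs with h
      · have : τ ≤ t i := hanti _ _ (by rw [Fin.le_def]; exact h.le)
        nlinarith [hc1 i]
      · have : t i ≤ τ := hanti _ _ (by rw [Fin.le_def]; exact not_lt.mp h)
        nlinarith [hc0 i]
    have h2 : ∑ i : Fin N, (if (i : ℕ) < r then t i - τ else 0)
        = (∑ i : Fin N, if (i : ℕ) < r then t i else 0) - r * τ := by
      have : (∑ i : Fin N, if (i : ℕ) < r then τ else 0) = r * τ := by
        rw [← Finset.sum_filter, Finset.sum_const, nsmul_eq_mul]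
        congr 2
        rw [Fin.card_filter_val_lt, min_eq_right hr.le]
      rw [← this, ← Finset.sum_sub_distrib]
      exact Finset.sum_congr rfl fun i _ => by split_ifs <;> simp
    have h3 : ∑ i, (t i - τ) * c i = ∑ i, t i * c i - τ * ∑ i, c i := by
      rw [Finset.mul_sum, ← Finset.sum_sub_distrib]
      exact Finset.sum_congr rfl fun i _ => by ring
    have h4 : τ * ∑ i, c i ≤ τ * r := mul_le_mul_of_nonneg_left hc (ht _)
    linarith
  · refine Finset.sum_le_sum fun i _ => ?_
    rw [if_pos (by omega)]
    nlinarith [hc1 i, ht i]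

/-- If `rank M ≤ r` then `⟨M, Z⟩ ≤ ‖M‖_F ‖Π_r(Z)‖_F`. -/
theorem stmt1 {m n : ℕ} (M Z : Matrix (Fin m) (Fin n) ℝ) (r : ℕ)
    (hM : M.rank ≤ r) (DZ : SVDOf Z) :
    frobInner M Z ≤ frobNorm M * frobNorm (DZ.trunc r) := by
  obtain ⟨w, q, hw, hq⟩ := aux_factor M
  have hMn : ∑ a, ∑ b, (M a b) ^ 2 = ∑ l, ∑ b, q l b ^ 2 := by
    simp_rw [hq]
    exact aux_expand _ w q (by intro i j; rw [hw])
  have hTn : ∑ a, ∑ b, (DZ.trunc r a b) ^ 2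
      = ∑ i ∈ Finset.univ.filter (fun i : Fin (min m n) => (i : ℕ) < r), DZ.s i ^ 2 := by
    have h := aux_expand (Finset.univ.filter (fun i : Fin (min m n) => (i : ℕ) < r)) DZ.u
      (fun i b => DZ.s i * DZ.v i b) (by intro i j; rw [DZ.u_orth])
    have h' : ∀ a b, DZ.trunc r a b = ∑ i ∈ Finset.univ.filter
        (fun i : Fin (min m n) => (i : ℕ) < r), DZ.u i a * (DZ.s i * DZ.v i b) := by
      intro a b
      simp only [SVDOf.trunc, Matrix.sum_apply, Matrix.of_apply]
      exact Finset.sum_congr rfl fun i _ => by ring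
    simp_rw [h']
    rw [h]
    refine Finset.sum_congr rfl fun i _ => ?_
    simp_rw [mul_pow]
    rw [← Finset.mul_sum]
    have := DZ.v_orth i i
    simp only [← sq, if_true] at this
    rw [this, mul_one]
  have hZ : ∀ a b, Z a b = ∑ i, DZ.s i * DZ.u i a * DZ.v i b := by
    intro a b
    have := congrFun (congrFun DZ.decomp a) b
    rw [this]
    simp [Matrix.sum_apply]
  have hin : frobInner M Z = ∑ p : Fin (min m n) × Fin M.rank,
      (∑ b, DZ.v p.1 b * q p.2 b) * (DZ.s p.1 * ∑ a, w p.2 a * DZ.u p.1 a) := by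
    rw [Fintype.sum_prod_type]
    unfold frobInner
    calc ∑ a, ∑ b, M a b * Z a b
        = ∑ a, ∑ b, ∑ i, ∑ l, (DZ.v i b * q l b) * (DZ.s i * (w l a * DZ.u i a)) := by
          refine Finset.sum_congr rfl fun a _ => Finset.sum_congr rfl fun b _ => ?_
          rw [hq, hZ, Finset.sum_mul_sum, Finset.sum_comm]
          exact Finset.sum_congr rfl fun i _ => Finset.sum_congr rfl fun l _ => by ring
      _ = ∑ a, ∑ i, ∑ l, ∑ b, (DZ.v i b * q l b) * (DZ.s i * (w l a * DZ.u i a)) := by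
          refine Finset.sum_congr rfl fun a _ => ?_
          rw [Finset.sum_comm]
          exact Finset.sum_congr rfl fun i _ => Finset.sum_comm
      _ = ∑ i, ∑ l, ∑ a, ∑ b, (DZ.v i b * q l b) * (DZ.s i * (w l a * DZ.u i a)) := by
          rw [Finset.sum_comm]
          exact Finset.sum_congr rfl fun i _ => Finset.sum_comm
      _ = _ := by
          refine Finset.sum_congr rfl fun i _ => Finset.sum_congr rfl fun l _ => ?_
          rw [Finset.sum_comm, Finset.mul_sum, Finset.sum_mul_sum]
  have h1 : ∑ p : Fin (min m n) × Fin M.rank, (∑ b, DZ.v p.1 b * q p.2 b) ^ 2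
      ≤ ∑ a, ∑ b, (M a b) ^ 2 := by
    rw [hMn, Fintype.sum_prod_type_right]
    exact Finset.sum_le_sum fun l _ =>
      aux_bessel DZ.v (by intro i j; rw [DZ.v_orth]) (q l)
  have h2 : ∑ p : Fin (min m n) × Fin M.rank, (DZ.s p.1 * ∑ a, w p.2 a * DZ.u p.1 a) ^ 2
      ≤ ∑ a, ∑ b, (DZ.trunc r a b) ^ 2 := by
    rw [hTn, Fintype.sum_prod_type]
    simp_rw [mul_pow, ← Finset.mul_sum]
    refine aux_major r (fun i => DZ.s i ^ 2)
      (fun i => ∑ l, (∑ a, w l a * DZ.u i a) ^ 2) (fun i => sq_nonneg _)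
      (fun i j hij => pow_le_pow_left₀ (DZ.s_nonneg j) (DZ.s_anti i j hij) 2)
      (fun i => Finset.sum_nonneg fun l _ => sq_nonneg _) ?_ ?_
    · intro i
      refine (aux_bessel w (by intro i j; rw [hw]) (DZ.u i)).trans ?_
      have := DZ.u_orth i i
      simp only [← sq, if_true] at this
      exact this.le
    · rw [Finset.sum_comm]
      have : ∀ l, ∑ i, (∑ a, w l a * DZ.u i a) ^ 2 ≤ 1 := by
        intro l
        have h := aux_bessel DZ.u (by intro i j; rw [DZ.u_orth]) (w l)
        have h' := hw l l
        simp only [← sq, if_true] at h'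
        rw [h'] at h
        simpa only [mul_comm] using h
      calc _ ≤ ∑ _l : Fin M.rank, (1 : ℝ) := Finset.sum_le_sum fun l _ => this l
        _ = (M.rank : ℝ) := by simp
        _ ≤ r := by exact_mod_cast hM
  rw [hin]
  refine (Real.sum_mul_le_sqrt_mul_sqrt _ _ _).trans ?_
  exact mul_le_mul (Real.sqrt_le_sqrt h1) (Real.sqrt_le_sqrt h2) (Real.sqrt_nonneg _)
    (Real.sqrt_nonneg _)
end

section
/- Let H, Z be real m×n matrices with rank(H) = n₀, set Ĥ = H + Z, and let ξ ≥ 2‖Z‖₂. Let Ĥ(ξ) denote the matrix obtained from Ĥ by keeping only the singular subspaces with singular values at least ξ. Then ‖Ĥ(ξ) − H‖_F² ≤ 18 · min_{k=0,…,n₀} ( 4kξ² + Σ_{i=k+1}^{n₀} s_i(H)² ). -/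
open Matrix Finset

attribute [local instance] Classical.propDecidable

theorem core {E F ι κ : Type*} [NormedAddCommGroup E] [InnerProductSpace ℝ E]
    [NormedAddCommGroup F] [InnerProductSpace ℝ F] [Fintype ι] [Fintype κ] [DecidableEq ι] [DecidableEq κ]
    (b : OrthonormalBasis ι ℝ E) (c : OrthonormalBasis κ ℝ F) (T H Z : E →ₗ[ℝ] F)
    (J : Finset ι) (K : Finset κ) (ξ : ℝ) (hξ0 : 0 ≤ ξ)
    (hZ : ∀ x, ‖Z x‖ ≤ ξ / 2 * ‖x‖)
    (hT1 : ∀ j ∈ J, T (b j) = H (b j) + Z (b j)) (hT2 : ∀ j ∉ J, T (b j) = 0)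
    (s : ι → ℝ) (u : ι → F) (hs : ∀ j ∈ J, ξ ≤ s j)
    (hu : Orthonormal ℝ (fun j : J => u j))
    (hHZ : ∀ j ∈ J, H (b j) + Z (b j) = s j • u j)
    (hout : ∀ y, (∀ j ∈ J, inner ℝ (b j) y = 0) → ‖H y + Z y‖ ≤ ξ * ‖y‖) :
    ∑ j, ‖T (b j) - H (b j)‖ ^ 2 ≤
      18 * (4 * (K.card : ℝ) * ξ ^ 2 + ∑ a ∈ Kᶜ, ∑ j, (inner ℝ (c a) (H (b j))) ^ 2) := by
  have hcn : ∀ x : F, ∑ a, (inner ℝ (c a) x) ^ 2 = ‖x‖ ^ 2 := fun x => by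
    simpa using c.sum_sq_norm_inner_right x
  have hZb : ∀ j, ‖Z (b j)‖ ^ 2 ≤ ξ ^ 2 / 4 := fun j => by
    have := hZ (b j)
    rw [b.norm_eq_one, mul_one] at this
    nlinarith [norm_nonneg (Z (b j))]
  set S := ∑ a ∈ Kᶜ, ∑ j, (inner ℝ (c a) (H (b j))) ^ 2 with hS
  have hS0 : 0 ≤ S := by positivity
  have split : ∀ f : ι → ℝ, ∑ j, f j = ∑ j ∈ J, f j + ∑ j ∈ Jᶜ, f j := fun f =>
    (Finset.sum_add_sum_compl J f).symm
  have splitK : ∀ f : κ → ℝ, ∑ j, f j = ∑ j ∈ K, f j + ∑ j ∈ Kᶜ, f j := fun f =>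
    (Finset.sum_add_sum_compl K f).symm
  -- step 1
  have h1 : ∑ j ∈ J, ‖T (b j) - H (b j)‖ ^ 2 ≤ J.card * (ξ ^ 2 / 4) := by
    rw [← nsmul_eq_mul]
    apply Finset.sum_le_card_nsmul
    intro j hj
    rw [hT1 j hj, add_sub_cancel_left]; exact hZb j
  -- step 2
  have h2 : ∀ a, ∑ j ∈ Jᶜ, (inner ℝ (c a) (H (b j))) ^ 2 ≤ 9 / 4 * ξ ^ 2 := by
    intro a
    set N := ∑ j ∈ Jᶜ, (inner ℝ (c a) (H (b j))) ^ 2 with hN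
    have hN0 : 0 ≤ N := by positivity
    set y : E := ∑ j ∈ Jᶜ, (inner ℝ (c a) (H (b j))) • b j with hy
    have hyH : inner ℝ (c a) (H y) = N := by
      simp [hy, hN, map_sum, inner_sum, inner_smul_right, pow_two]
    have hyn : ‖y‖ ^ 2 = N := by
      rw [← real_inner_self_eq_norm_sq, hy, b.orthonormal.inner_sum]
      simp [hN, pow_two]
    have hperp : ∀ j ∈ J, inner ℝ (b j) y = 0 := by
      intro j hj
      rw [hy, inner_sum]
      apply Finset.sum_eq_zero
      intro i hi
      rw [inner_smul_right, b.orthonormal.2 (by rintro rfl; simp at hi; exact hi hj), mul_zero]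
    have e1 := hout y hperp
    have e2 := hZ y
    have e3 : ‖H y‖ ≤ ‖H y + Z y‖ + ‖Z y‖ := by
      have := norm_sub_le (H y + Z y) (Z y); simpa using this
    have e4 : N ≤ ‖H y‖ := by
      rw [← hyH]
      have := real_inner_le_norm (c a) (H y)
      rwa [c.norm_eq_one, one_mul] at this
    have e5 : ‖y‖ ^ 2 ≤ 3 / 2 * ξ * ‖y‖ := by rw [hyn]; linarith
    have e6 : ‖y‖ ≤ 3 / 2 * ξ := by
      by_contra hc
      push Not at hc
      nlinarith [norm_nonneg y]
    rw [← hyn]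
    nlinarith [norm_nonneg y]
  have h3 : ∑ j ∈ Jᶜ, ‖T (b j) - H (b j)‖ ^ 2 ≤ K.card * (9 / 4 * ξ ^ 2) + S := by
    have : ∑ j ∈ Jᶜ, ‖T (b j) - H (b j)‖ ^ 2 =
        ∑ a, ∑ j ∈ Jᶜ, (inner ℝ (c a) (H (b j))) ^ 2 := by
      rw [Finset.sum_comm]
      refine Finset.sum_congr rfl fun j hj => ?_
      rw [hT2 j (by simpa using hj), zero_sub, norm_neg, hcn]
    rw [this, splitK, hS]
    refine add_le_add ?_ ?_
    · rw [← nsmul_eq_mul]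
      exact Finset.sum_le_card_nsmul _ _ _ fun a _ => h2 a
    · refine Finset.sum_le_sum fun a _ => ?_
      exact Finset.sum_le_univ_sum_of_nonneg fun j => sq_nonneg _
  -- step 3
  have h4 : ∀ j ∈ J, ξ ^ 2 / 2 ≤ ξ ^ 2 * ∑ a ∈ K, (inner ℝ (u j) (c a)) ^ 2 +
      2 * ∑ a ∈ Kᶜ, (inner ℝ (c a) (H (b j))) ^ 2 := by
    intro j hj
    have un : ‖u j‖ = 1 := hu.1 ⟨j, hj⟩
    have e1 := hcn (u j)
    rw [un, splitK] at e1
    have e2 : ∑ a ∈ Kᶜ, (inner ℝ (c a) (Z (b j))) ^ 2 ≤ ξ ^ 2 / 4 :=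
      le_trans (Finset.sum_le_univ_sum_of_nonneg fun j => sq_nonneg _)
        ((hcn _).trans_le (hZb j))
    have e3 : ξ ^ 2 * ∑ a ∈ Kᶜ, (inner ℝ (c a) (u j)) ^ 2 ≤
       2 * ∑ a ∈ Kᶜ, (inner ℝ (c a) (H (b j))) ^ 2 +
        2 * ∑ a ∈ Kᶜ, (inner ℝ (c a) (Z (b j))) ^ 2 := by
      rw [Finset.mul_sum, Finset.mul_sum, Finset.mul_sum, ← Finset.sum_add_distrib]
      refine Finset.sum_le_sum fun a _ => ?_
      have := congrArg (inner ℝ (c a)) (hHZ j hj)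
      rw [inner_add_right, inner_smul_right] at this
      have h5 : ξ ^ 2 ≤ s j ^ 2 := pow_le_pow_left₀ hξ0 (hs j hj) 2
      have h6 := mul_le_mul_of_nonneg_right h5 (sq_nonneg (inner ℝ (c a) (u j)))
      rw [← mul_pow, ← mul_pow, ← this, mul_pow] at h6
      nlinarith [sq_nonneg (inner ℝ (c a) (H (b j)) - inner ℝ (c a) (Z (b j)))]
    simp_rw [real_inner_comm (c _) (u j)] 
    nlinarith
  have h5 : J.card * (ξ ^ 2 / 2) ≤ ξ ^ 2 * K.card + 2 * S := by
    have e1 := Finset.card_nsmul_le_sum J _ _ h4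
    rw [nsmul_eq_mul] at e1
    refine e1.trans ?_
    rw [Finset.sum_add_distrib, ← Finset.mul_sum, ← Finset.mul_sum]
    have e2 : ∑ j ∈ J, ∑ a ∈ K, (inner ℝ (u j) (c a)) ^ 2 ≤ K.card := by
      rw [Finset.sum_comm]
      have := Finset.sum_le_card_nsmul K (fun a => ∑ j ∈ J, (inner ℝ (u j) (c a)) ^ 2) 1 ?_
      · simpa using this
      intro a _
      have := hu.sum_inner_products_le (c a) (s := Finset.univ)
      rw [c.norm_eq_one] at this
      rw [← Finset.sum_coe_sort]
      simpa using this
    have e3 : ∑ j ∈ J, ∑ a ∈ Kᶜ, (inner ℝ (c a) (H (b j))) ^ 2 ≤ S := by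
      rw [Finset.sum_comm, hS]
      refine Finset.sum_le_sum fun a _ => ?_
      exact Finset.sum_le_univ_sum_of_nonneg fun j => sq_nonneg _
    nlinarith [mul_le_mul_of_nonneg_left e2 (sq_nonneg ξ)]
  rw [split]
  have : 0 ≤ (K.card : ℝ) * ξ ^ 2 := by positivity
  nlinarith

/-- The Euclidean linear map of a matrix. -/
noncomputable def eLin {m n : ℕ} (A : Matrix (Fin m) (Fin n) ℝ) :
    EuclideanSpace ℝ (Fin n) →ₗ[ℝ] EuclideanSpace ℝ (Fin m) := Matrix.toLpLin 2 2 A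

theorem norm_le_specNorm {m n : ℕ} (A : Matrix (Fin m) (Fin n) ℝ)
    (x : EuclideanSpace ℝ (Fin n)) : ‖eLin A x‖ ≤ specNorm A * ‖x‖ := by
  have key : ∀ y : EuclideanSpace ℝ (Fin n),
      Real.sqrt (∑ a, (A.mulVec y.ofLp) a ^ 2) = ‖eLin A y‖ := by
    intro y
    rw [← Real.sqrt_sq (norm_nonneg (eLin A y)), EuclideanSpace.real_norm_sq_eq]
    rfl
  have bdd : BddAbove (Set.range fun x : {x : Fin n → ℝ // ∑ a, x a ^ 2 ≤ 1} =>
      Real.sqrt (∑ a, (A.mulVec x.1) a ^ 2)) := by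
    refine ⟨‖(eLin A).toContinuousLinearMap‖, ?_⟩
    rintro _ ⟨⟨y, hy⟩, rfl⟩
    have h1 := key (WithLp.toLp 2 y)
    simp only at h1 ⊢
    rw [h1]
    have h2 := (eLin A).toContinuousLinearMap.le_opNorm (WithLp.toLp 2 y)
    have h3 : ‖(WithLp.toLp 2 y : EuclideanSpace ℝ (Fin n))‖ ≤ 1 := by
      have := EuclideanSpace.real_norm_sq_eq (WithLp.toLp 2 y : EuclideanSpace ℝ (Fin n))
      simp only at this
      rw [← this] at hy
      exact (sq_le_one_iff₀ (norm_nonneg _)).1 hy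
    refine h2.trans ?_
    exact mul_le_of_le_one_right (norm_nonneg _) h3
  by_cases hx : x = 0
  · simp [hx]
  have hx' : 0 < ‖x‖ := norm_pos_iff.2 hx
  have hn : ‖(‖x‖⁻¹ • x)‖ = 1 := by
    rw [norm_smul, norm_inv, norm_norm, inv_mul_cancel₀ hx'.ne']
  have h1 := le_ciSup bdd ⟨(‖x‖⁻¹ • x).ofLp, by
    rw [← EuclideanSpace.real_norm_sq_eq, hn]; norm_num⟩
  simp only at h1
  rw [key, map_smul, norm_smul, norm_inv, norm_norm] at h1
  rw [inv_mul_le_iff₀ hx'] at h1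
  rw [mul_comm]; exact h1

theorem specNorm_nonneg {m n : ℕ} (A : Matrix (Fin m) (Fin n) ℝ) : 0 ≤ specNorm A :=
  Real.iSup_nonneg fun _ => Real.sqrt_nonneg _

theorem frob_basis {m n : ℕ} (A : Matrix (Fin m) (Fin n) ℝ)
    (b : OrthonormalBasis (Fin n) ℝ (EuclideanSpace ℝ (Fin n))) :
    frobNorm A ^ 2 = ∑ j, ‖eLin A (b j)‖ ^ 2 := by
  rw [frobNorm, Real.sq_sqrt (by positivity)]
  simp_rw [EuclideanSpace.real_norm_sq_eq (eLin A _)]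
  rw [Finset.sum_comm (s := Finset.univ (α := Fin n))]
  refine Finset.sum_congr rfl fun a _ => ?_
  have h := b.sum_sq_inner_right (WithLp.toLp 2 (A a))
  rw [EuclideanSpace.real_norm_sq_eq] at h
  rw [← h]
  refine Finset.sum_congr rfl fun j _ => ?_
  simp [eLin, Matrix.toLpLin_apply, Matrix.mulVec, dotProduct, PiLp.inner_apply]

/-- the vectors of an SVD in Euclidean space -/
noncomputable def eu {m n : ℕ} {M : Matrix (Fin m) (Fin n) ℝ} (D : SVDOf M) (i : Fin (min m n)) :
    EuclideanSpace ℝ (Fin m) := WithLp.toLp 2 (D.u i)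

noncomputable def ev {m n : ℕ} {M : Matrix (Fin m) (Fin n) ℝ} (D : SVDOf M) (i : Fin (min m n)) :
    EuclideanSpace ℝ (Fin n) := WithLp.toLp 2 (D.v i)

theorem eu_orth {m n : ℕ} {M : Matrix (Fin m) (Fin n) ℝ} (D : SVDOf M) :
    Orthonormal ℝ (eu D) := by
  rw [orthonormal_iff_ite]
  intro i j
  rw [real_inner_comm, ← D.u_orth i j]
  simp [eu, PiLp.inner_apply]

theorem ev_orth {m n : ℕ} {M : Matrix (Fin m) (Fin n) ℝ} (D : SVDOf M) :
    Orthonormal ℝ (ev D) := by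
  rw [orthonormal_iff_ite]
  intro i j
  rw [real_inner_comm, ← D.v_orth i j]
  simp [ev, PiLp.inner_apply]

theorem eLin_sum {m n : ℕ} {M : Matrix (Fin m) (Fin n) ℝ} (D : SVDOf M)
    (S : Finset (Fin (min m n))) (x : EuclideanSpace ℝ (Fin n)) :
    eLin (∑ i ∈ S, Matrix.of fun a b => D.s i * D.u i a * D.v i b) x =
      ∑ i ∈ S, (D.s i * inner ℝ (ev D i) x) • eu D i := by
  have : eLin (∑ i ∈ S, Matrix.of fun a b => D.s i * D.u i a * D.v i b) =
      ∑ i ∈ S, eLin (Matrix.of fun a b => D.s i * D.u i a * D.v i b) := by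
    simp [eLin, map_sum]
  rw [this, LinearMap.sum_apply]
  refine Finset.sum_congr rfl fun i _ => ?_
  ext a
  simp only [eLin, Matrix.toLpLin_apply, Matrix.mulVec, dotProduct, PiLp.inner_apply, ev, eu,
    Matrix.of_apply, PiLp.smul_apply, smul_eq_mul, Finset.mul_sum, Finset.sum_mul]
  refine Finset.sum_congr rfl fun j _ => ?_
  simp
  ring

theorem eLin_M {m n : ℕ} {M : Matrix (Fin m) (Fin n) ℝ} (D : SVDOf M)
    (x : EuclideanSpace ℝ (Fin n)) :
    eLin M x = ∑ i, (D.s i * inner ℝ (ev D i) x) • eu D i := by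
  rw [← eLin_sum, ← D.decomp]

theorem eLin_M_ev {m n : ℕ} {M : Matrix (Fin m) (Fin n) ℝ} (D : SVDOf M) (j) :
    eLin M (ev D j) = D.s j • eu D j := by
  rw [eLin_M D, Finset.sum_eq_single j]
  · rw [orthonormal_iff_ite.1 (ev_orth D)]; simp
  · intro i _ hij
    rw [(ev_orth D).2 hij]; simp
  · simp

theorem s_zero {m n : ℕ} {M : Matrix (Fin m) (Fin n) ℝ} (D : SVDOf M) (i : Fin (min m n))
    (hi : M.rank ≤ i) : D.s i = 0 := by
  by_contra hne
  have hpos : 0 < D.s i := lt_of_le_of_ne (D.s_nonneg i) (Ne.symm hne)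
  have hlin : LinearIndependent ℝ (fun j : Finset.Iic i => eu D j) :=
    (eu_orth D).linearIndependent.comp _ Subtype.val_injective
  have hmem : ∀ j : Finset.Iic i, eu D j ∈ LinearMap.range (eLin M) := by
    rintro ⟨j, hj⟩
    have hj' : 0 < D.s j := hpos.trans_le (D.s_anti j i (by simpa using hj))
    refine ⟨(D.s j)⁻¹ • ev D j, ?_⟩
    rw [map_smul, eLin_M_ev, smul_smul, inv_mul_cancel₀ hj'.ne', one_smul]
  have hlin2 : LinearIndependent ℝ
      (fun j : Finset.Iic i => (⟨eu D j, hmem j⟩ : LinearMap.range (eLin M))) := by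
    apply LinearIndependent.of_comp (LinearMap.range (eLin M)).subtype
    exact hlin
  have := hlin2.fintype_card_le_finrank
  have hr : Module.finrank ℝ (LinearMap.range (eLin M)) = M.rank := by
    rw [eLin, Matrix.rank_eq_finrank_range_toLin M (EuclideanSpace.basisFun (Fin m) ℝ).toBasis
      (EuclideanSpace.basisFun (Fin n) ℝ).toBasis]
    rfl
  rw [hr, Fintype.card_coe, Fin.card_Iic] at this
  omega

/-- extend an orthonormal family indexed by `Fin p`, `p ≤ q`, to an orthonormal basis. -/
theorem extend_basis {p q : ℕ} (hpq : p ≤ q) (v : Fin p → EuclideanSpace ℝ (Fin q))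
    (hv : Orthonormal ℝ v) :
    ∃ b : OrthonormalBasis (Fin q) ℝ (EuclideanSpace ℝ (Fin q)),
      ∀ i : Fin p, b (Fin.castLE hpq i) = v i := by
  let w : Fin q → EuclideanSpace ℝ (Fin q) := fun j => if h : (j : ℕ) < p then v ⟨j, h⟩ else 0
  have hw : Orthonormal ℝ (({j : Fin q | (j : ℕ) < p}).domRestrict w) := by
    have := hv.comp (fun j : {j : Fin q | (j : ℕ) < p} => (⟨j.1, j.2⟩ : Fin p)) (by
      intro a b h
      ext
      simpa using h)
    convert this using 1
    ext1 j
    have := j.2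
    simp only [Set.mem_ofPred_eq] at this
    simp [w, Set.domRestrict, this]
  obtain ⟨b, hb⟩ := hw.exists_orthonormalBasis_extension_of_card_eq (by simp)
  refine ⟨b, fun i => ?_⟩
  rw [hb _ (by simp)]
  simp [w]
/-- Rank-adaptive bound for singular value thresholding:
`‖Ĥ(ξ) − H‖_F² ≤ 18 min_k (4kξ² + Σ_{i>k} s_i(H)²)` whenever `ξ ≥ 2‖Z‖₂`. -/
theorem stmt5 {m n : ℕ} (H Z : Matrix (Fin m) (Fin n) ℝ) (n₀ : ℕ)
    (hrank : H.rank = n₀) (DH : SVDOf H) (DHhat : SVDOf (H + Z))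
    (ξ : ℝ) (hξ : 2 * specNorm Z ≤ ξ) :
    frobNorm (DHhat.thresh ξ - H) ^ 2 ≤
      18 * (Finset.range (n₀ + 1)).inf'
        (Finset.nonempty_range_iff.mpr (Nat.succ_ne_zero n₀))
        (fun k => 4 * (k : ℝ) * ξ ^ 2 +
          ∑ i ∈ Finset.univ.filter
            (fun i : Fin (min m n) => k ≤ (i : ℕ) ∧ (i : ℕ) < n₀), DH.s i ^ 2) := by
  obtain ⟨b, hb⟩ := extend_basis (min_le_right m n) (ev DHhat) (ev_orth DHhat)
  obtain ⟨c, hc⟩ := extend_basis (min_le_left m n) (eu DH) (eu_orth DH)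
  have hξ0 : 0 ≤ ξ := le_trans (mul_nonneg zero_le_two (specNorm_nonneg Z)) hξ
  have hadd : ∀ x, eLin (H + Z) x = eLin H x + eLin Z x := fun x => by simp [eLin]
  obtain ⟨k, hk, hkeq⟩ := Finset.exists_mem_eq_inf' (s := Finset.range (n₀ + 1))
    (Finset.nonempty_range_iff.mpr (Nat.succ_ne_zero n₀))
    (fun k => 4 * (k : ℝ) * ξ ^ 2 +
          ∑ i ∈ Finset.univ.filter
            (fun i : Fin (min m n) => k ≤ (i : ℕ) ∧ (i : ℕ) < n₀), DH.s i ^ 2)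
  rw [hkeq]
  clear hkeq
  set I : Finset (Fin (min m n)) := Finset.univ.filter (fun i => ξ ≤ DHhat.s i) with hI
  set J : Finset (Fin n) := I.map (Fin.castLEEmb (min_le_right m n)) with hJ
  set K : Finset (Fin m) := Finset.univ.filter (fun i => (i : ℕ) < k) with hK
  have hmemJ : ∀ j, j ∈ J ↔ ∃ i, ξ ≤ DHhat.s i ∧ Fin.castLE (min_le_right m n) i = j := by
    intro j
    simp [hJ, hI]
  let s' : Fin n → ℝ := fun j => if h : (j : ℕ) < min m n then DHhat.s ⟨j, h⟩ else 0
  let u' : Fin n → EuclideanSpace ℝ (Fin m) :=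
    fun j => if h : (j : ℕ) < min m n then eu DHhat ⟨j, h⟩ else 0
  have hs' : ∀ i, s' (Fin.castLE (min_le_right m n) i) = DHhat.s i := fun i => dif_pos i.2
  have hu' : ∀ i, u' (Fin.castLE (min_le_right m n) i) = eu DHhat i := fun i => dif_pos i.2
  have hthr : ∀ x, eLin (DHhat.thresh ξ) x =
      ∑ i ∈ I, (DHhat.s i * inner ℝ (ev DHhat i) x) • eu DHhat i := fun x => by
    rw [SVDOf.thresh, eLin_sum]
  have main := core b c (eLin (DHhat.thresh ξ)) (eLin H) (eLin Z) J K ξ hξ0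
    (fun x => (norm_le_specNorm Z x).trans
      (mul_le_mul_of_nonneg_right (by linarith) (norm_nonneg _)))
    (by
      intro j hj
      obtain ⟨i, hi, rfl⟩ := (hmemJ j).1 hj
      rw [← hadd, hb, hthr, eLin_M DHhat]
      refine Finset.sum_subset (Finset.subset_univ _) fun l _ hl => ?_
      have : l ≠ i := by
        rintro rfl
        exact hl (by simp [hI, hi])
      rw [(ev_orth DHhat).2 this]; simp)
    (by
      intro j hj
      rw [hthr]
      refine Finset.sum_eq_zero fun l hl => ?_
      have : Fin.castLE (min_le_right m n) l ≠ j := by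
        rintro rfl
        exact hj ((hmemJ _).2 ⟨l, by simpa [hI] using hl, rfl⟩)
      rw [← hb, b.orthonormal.2 this]; simp)
    s' u'
    (by
      intro j hj
      obtain ⟨i, hi, rfl⟩ := (hmemJ j).1 hj
      rw [hs']; exact hi)
    (by
      have hlt : ∀ j : J, (j : ℕ) < min m n := by
        rintro ⟨j, hj⟩
        obtain ⟨i, hi, rfl⟩ := (hmemJ j).1 hj
        exact i.2
      have := (eu_orth DHhat).comp (fun j : J => (⟨(j : Fin n), hlt j⟩ : Fin (min m n))) (by
        intro a b h
        ext
        simpa using h)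
      have e : (fun j : J => u' j) =
          eu DHhat ∘ (fun j : J => (⟨(j : Fin n), hlt j⟩ : Fin (min m n))) := by
        funext j
        exact dif_pos (hlt j)
      rw [e]
      exact this)
    (by
      intro j hj
      obtain ⟨i, hi, rfl⟩ := (hmemJ j).1 hj
      rw [← hadd, hb, hs', hu', eLin_M_ev])
    (by
      intro y hy
      rw [← hadd, eLin_M DHhat]
      refine (sq_le_sq₀ (norm_nonneg _) (mul_nonneg hξ0 (norm_nonneg _))).1 ?_
      rw [← real_inner_self_eq_norm_sq, (eu_orth DHhat).inner_sum]
      have hbes := (ev_orth DHhat).sum_inner_products_le y (s := Finset.univ)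
      rw [mul_pow]
      refine le_trans ?_ (mul_le_mul_of_nonneg_left hbes (sq_nonneg ξ))
      rw [Finset.mul_sum]
      refine Finset.sum_le_sum fun i _ => ?_
      by_cases hi : ξ ≤ DHhat.s i
      · have := hy _ ((hmemJ _).2 ⟨i, hi, rfl⟩)
        rw [hb] at this
        simp [this]
      · push Not at hi
        have h1 : DHhat.s i ^ 2 ≤ ξ ^ 2 := pow_le_pow_left₀ (DHhat.s_nonneg i) hi.le 2
        have h2 := mul_le_mul_of_nonneg_right h1 (sq_nonneg (inner ℝ (ev DHhat i) y))
        simp only [Real.norm_eq_abs, sq_abs, conj_trivial]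
        nlinarith)
  rw [frob_basis _ b]
  have hsub : ∀ x, eLin (DHhat.thresh ξ - H) x = eLin (DHhat.thresh ξ) x - eLin H x :=
    fun x => by simp [eLin]
  simp_rw [hsub]
  refine main.trans (mul_le_mul_of_nonneg_left (add_le_add ?_ (le_of_eq ?_)) (by norm_num))
  · have hKc : (K.card : ℝ) ≤ k := by
      have : K.card ≤ (Finset.range k).card :=
        Finset.card_le_card_of_injOn (fun i => (i : ℕ)) (fun i hi => by simpa [hK] using hi)
          (fun a _ b _ h => Fin.ext h)
      rw [Finset.card_range] at this
      exact_mod_cast this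
    nlinarith [mul_le_mul_of_nonneg_right hKc (sq_nonneg ξ)]
  · have hg1 : ∀ i, ∑ j, (inner ℝ (c (Fin.castLE (min_le_left m n) i)) (eLin H (b j))) ^ 2
        = DH.s i ^ 2 := by
      intro i
      have h1 : ∀ x, inner ℝ (c (Fin.castLE (min_le_left m n) i)) (eLin H x) =
          DH.s i * inner ℝ (ev DH i) x := by
        intro x
        rw [hc, eLin_M DH, (eu_orth DH).inner_right_fintype]
      simp_rw [h1, mul_pow]
      rw [← Finset.mul_sum]
      simp_rw [real_inner_comm (b _) (ev DH i)]
      simp_rw [real_inner_comm (ev DH i) (b _)]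
      have := b.sum_sq_norm_inner_left (ev DH i)
      simp only [Real.norm_eq_abs, sq_abs] at this
      rw [this, (ev_orth DH).1 i]; simp
    have hg2 : ∀ a : Fin m, ¬ (a : ℕ) < min m n →
        ∑ j, (inner ℝ (c a) (eLin H (b j))) ^ 2 = 0 := by
      intro a ha
      refine Finset.sum_eq_zero fun j _ => ?_
      rw [eLin_M DH, inner_sum]
      rw [Finset.sum_eq_zero]
      · simp
      intro i _
      have : a ≠ Fin.castLE (min_le_left m n) i := by
        rintro rfl
        exact ha i.2
      rw [← hc, inner_smul_right, c.orthonormal.2 this, mul_zero]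
    simp_rw [← hg1]
    symm
    refine (Finset.sum_map _ (Fin.castLEEmb (min_le_left m n))
      (fun a => ∑ j, (inner ℝ (c a) (eLin H (b j))) ^ 2)).symm.trans ?_
    refine Finset.sum_subset ?_ ?_
    · intro a ha
      simp only [Finset.mem_map, Finset.mem_filter, Finset.mem_univ, true_and] at ha
      obtain ⟨i, hi, rfl⟩ := ha
      simpa [hK] using hi.1
    · intro a ha ha2
      by_cases hlt : (a : ℕ) < min m n
      · have e : a = Fin.castLE (min_le_left m n) ⟨a, hlt⟩ := rfl
        rw [e, hg1]
        have hka : k ≤ (a : ℕ) := by simpa [hK] using ha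
        have : n₀ ≤ (a : ℕ) := by
          by_contra hcon
          push Not at hcon
          apply ha2
          simp only [Finset.mem_map, Finset.mem_filter, Finset.mem_univ, true_and]
          exact ⟨⟨a, hlt⟩, ⟨hka, hcon⟩, rfl⟩
        rw [s_zero DH _ (by rw [hrank]; exact this)]
        simp
      · exact hg2 a hlt
end
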